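/- arXiv:1706.00131 — 2 statements merged into one kernel-verified Lean document; each statement's English description precedes it below -/
import Mathlib

section
/- There exist absolute constants c, C > 0 such that for every Borel probability measure μ on [0,1)², every θ ∈ S¹, and every m ∈ ℕ: c · ‖Π_θ(μ^{(m)})‖₂² ≤ ‖(μ_θ)^{(m)}‖₂² ≤ C · ‖Π_θ(μ^{(m)})‖₂². Here (μ_θ)^{(m)} is the level-m discretization on ℝ (with respect to dyadic intervals) of the projected measure μ_θ, Π_θ(μ^{(m)}) is the pushforward under Π_θ of the level-m discretization of μ on ℝ², and ‖·‖₂ denotes the L² norm of the density with respect to Lebesgue measure on ℝ. -/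
/-!
Write `N = 2 ^ m`, let `σ = Π_θ (μ^{(m)})`, and let `p n` be the mass that `μ_θ` gives to the dyadic
interval `I n` of length `1 / N`. The density of `(μ_θ)^{(m)}` is `N * p n` on `I n`, so its squared
`L²` norm is `N * ∑ p n ^ 2` (`L2sq_discretize1`). Since `|θ i| ≤ 1`, a dyadic square of side `1 / N`
which meets the strip over `I n` is contained in the strip over `I (n-2) ∪ ⋯ ∪ I (n+2)`
(`square_subset_strip`). Two estimates follow.

* `strip_le`: discretizing moves mass by at most two intervals, so `p n ≤ ∑_{|j| ≤ 2} σ (I (n+j))`.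
  Cauchy–Schwarz gives `σ (I k) ^ 2 ≤ N⁻¹ ∫_{I k} f ^ 2` with `f` the density of `σ`, and summing
  over `n` yields the upper bound.
* `map_discretize2_le`: one of `|θ 0|, |θ 1|` is at least `1 / 2`, so by Fubini the density of the
  projection of the normalized Lebesgue measure on a dyadic square is at most `2 * N`
  (`volume_square_inter_le`). Hence `f ≤ 2 * N * ∑_{|j| ≤ 2} p (n+j)` on `I n`, and summing the
  squares yields the lower bound.
-/

open MeasureTheory Filter Set
open scoped ENNReal Topology

noncomputable section

/-- The half-open dyadic square of generation `k` in `ℝ²`, indexed by `n : Fin 2 → ℤ`. -/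
def dyadicSquare (k : ℕ) (n : Fin 2 → ℤ) : Set (Fin 2 → ℝ) :=
  {x | ∀ i, ⌊x i * 2 ^ k⌋ = n i}

/-- The half-open dyadic interval of generation `k` in `ℝ`, indexed by `n : ℤ`. -/
def dyadicInterval (k : ℕ) (n : ℤ) : Set ℝ := {t | ⌊t * 2 ^ k⌋ = n}

/-- The unit square `[0,1)²`. -/
def unitSquare : Set (Fin 2 → ℝ) := {x | ∀ i, x i ∈ Set.Ico (0 : ℝ) 1}

/-- The level-`m` discretization of a measure on `ℝ²`:
`μ^{(m)} = Σ_{Q ∈ D_m} μ(Q)·L_Q` with `L_Q` normalized Lebesgue measure on `Q`. -/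
def discretize2 (m : ℕ) (μ : Measure (Fin 2 → ℝ)) : Measure (Fin 2 → ℝ) :=
  Measure.sum fun n : Fin 2 → ℤ =>
    (μ (dyadicSquare m n) * (2 : ℝ≥0∞) ^ (2 * m)) • volume.restrict (dyadicSquare m n)

/-- The level-`m` discretization of a measure on `ℝ` (with respect to dyadic intervals). -/
def discretize1 (m : ℕ) (ρ : Measure ℝ) : Measure ℝ :=
  Measure.sum fun n : ℤ =>
    (ρ (dyadicInterval m n) * (2 : ℝ≥0∞) ^ m) • volume.restrict (dyadicInterval m n)

/-- The orthogonal projection `Π_θ(x) = θ·x` in direction `θ`. -/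
def proj (θ : Fin 2 → ℝ) (x : Fin 2 → ℝ) : ℝ := θ 0 * x 0 + θ 1 * x 1

/-- Squared `L²(Lebesgue)` norm of the density of a measure on `ℝ`. -/
def L2sq (ρ : Measure ℝ) : ℝ≥0∞ := ∫⁻ t, ρ.rnDeriv volume t ^ 2

/-! ### Dyadic intervals and squares -/

lemma measurable_floor_scale (m : ℕ) : Measurable fun t : ℝ => ⌊t * 2 ^ m⌋ := by
  fun_prop

lemma measurableSet_dyadicInterval (m : ℕ) (n : ℤ) : MeasurableSet (dyadicInterval m n) :=
  measurable_floor_scale m (measurableSet_singleton n)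

lemma dyadicSquare_eq_pi (m : ℕ) (k : Fin 2 → ℤ) :
    dyadicSquare m k = Set.univ.pi fun i => dyadicInterval m (k i) := by
  ext x; simp [dyadicSquare, dyadicInterval]

lemma measurableSet_dyadicSquare (m : ℕ) (k : Fin 2 → ℤ) : MeasurableSet (dyadicSquare m k) := by
  rw [dyadicSquare_eq_pi]
  exact MeasurableSet.univ_pi fun i => measurableSet_dyadicInterval m _

lemma volume_dyadicInterval (m : ℕ) (n : ℤ) :
    volume (dyadicInterval m n) = ((2 : ℝ≥0∞) ^ m)⁻¹ := by
  have hN : (0 : ℝ) < 2 ^ m := by positivity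
  have : dyadicInterval m n = Set.Ico ((n : ℝ) / 2 ^ m) ((n + 1) / 2 ^ m) := by
    ext t
    simp only [dyadicInterval, mem_ofPred_eq, Int.floor_eq_iff, mem_Ico, div_le_iff₀ hN,
      lt_div_iff₀ hN]
  rw [this, Real.volume_Ico, ← sub_div, add_sub_cancel_left, one_div,
    ENNReal.ofReal_inv_of_pos hN, ENNReal.ofReal_pow (by norm_num)]
  norm_num

lemma volume_dyadicSquare (m : ℕ) (k : Fin 2 → ℤ) :
    volume (dyadicSquare m k) = ((2 : ℝ≥0∞) ^ (2 * m))⁻¹ := by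
  rw [dyadicSquare_eq_pi, volume_pi_pi]
  simp only [volume_dyadicInterval, Finset.prod_const, Finset.card_univ, Fintype.card_fin]
  rw [← ENNReal.inv_pow, ← pow_mul, mul_comm]

lemma measurable_proj (θ : Fin 2 → ℝ) : Measurable (proj θ) := by
  unfold proj; fun_prop

/-- The dyadic squares of a fixed generation partition the plane. -/
lemma measure_eq_tsum_dyadicSquare (m : ℕ) (μ : Measure (Fin 2 → ℝ)) {B : Set (Fin 2 → ℝ)}
    (hB : MeasurableSet B) : μ B = ∑' k, μ (dyadicSquare m k ∩ B) := by
  rw [← measure_iUnion]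
  · congr 1
    ext x
    simp [dyadicSquare, ← funext_iff]
  · intro k l hkl
    refine Set.disjoint_left.2 fun x hx hx' => hkl ?_
    funext i
    exact (hx.1 i).symm.trans (hx'.1 i)
  · exact fun k => (measurableSet_dyadicSquare m k).inter hB

/-- The union of the dyadic interval with index `n` and its two neighbours on each side. -/
def fatInterval (m : ℕ) (n : ℤ) : Set ℝ :=
  ⋃ j ∈ Finset.Icc (-2 : ℤ) 2, dyadicInterval m (n + j)

lemma measurableSet_fatInterval (m : ℕ) (n : ℤ) : MeasurableSet (fatInterval m n) :=
  Finset.measurableSet_biUnion _ fun _ _ => measurableSet_dyadicInterval m _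

lemma measure_fatInterval_le (ρ : Measure ℝ) (m : ℕ) (n : ℤ) :
    ρ (fatInterval m n) ≤ ∑ j ∈ Finset.Icc (-2 : ℤ) 2, ρ (dyadicInterval m (n + j)) :=
  measure_biUnion_finset_le _ _

/-- A dyadic square meeting the strip over a dyadic interval lies in the strip over the fattened
interval, since its projection has length less than two sides. -/
lemma square_subset_strip {θ : Fin 2 → ℝ} (hθ : θ 0 ^ 2 + θ 1 ^ 2 = 1) {m : ℕ} {k : Fin 2 → ℤ}
    {n : ℤ} {x : Fin 2 → ℝ} (hx : x ∈ dyadicSquare m k) (hxn : proj θ x ∈ dyadicInterval m n) :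
    dyadicSquare m k ⊆ proj θ ⁻¹' fatInterval m n := by
  intro y hy
  have key : ∀ i, |θ i| ≤ 1 → |θ i * (y i * 2 ^ m) - θ i * (x i * 2 ^ m)| < 1 := by
    intro i hi
    rw [← mul_sub, abs_mul]
    have h1 : |y i * 2 ^ m - x i * 2 ^ m| < 1 :=
      Int.abs_sub_lt_one_of_floor_eq_floor ((hy i).trans (hx i).symm)
    nlinarith [abs_nonneg (θ i), abs_nonneg (y i * 2 ^ m - x i * 2 ^ m)]
  have h0 := abs_lt.1 (key 0 (abs_le_one_iff_mul_self_le_one.2 (by nlinarith [sq_nonneg (θ 1)])))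
  have h1 := abs_lt.1 (key 1 (abs_le_one_iff_mul_self_le_one.2 (by nlinarith [sq_nonneg (θ 0)])))
  have hn : ⌊proj θ x * 2 ^ m⌋ = n := hxn
  obtain ⟨hn1, hn2⟩ := Int.floor_eq_iff.1 hn
  simp only [proj] at hn1 hn2
  have l1 : n - 2 ≤ ⌊proj θ y * 2 ^ m⌋ := by
    rw [Int.le_floor]; push_cast; simp only [proj]; linarith
  have l2 : ⌊proj θ y * 2 ^ m⌋ < n + 3 := by
    rw [Int.floor_lt]; push_cast; simp only [proj]; linarith
  simp only [fatInterval, mem_preimage, mem_iUnion, dyadicInterval, mem_ofPred_eq, Finset.mem_Icc]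
  exact ⟨⌊proj θ y * 2 ^ m⌋ - n, by omega, by omega⟩

/-! ### Fubini estimate for a projected square -/

lemma volume_affine_preimage_le {a : ℝ} (ha : 1 / 2 ≤ |a|) (b : ℝ) (A : Set ℝ) :
    volume ((fun t => a * t + b) ⁻¹' A) ≤ 2 * volume A := by
  have ha0 : a ≠ 0 := by rintro rfl; norm_num at ha
  have : (fun t => a * t + b) ⁻¹' A = (a * ·) ⁻¹' ((· + b) ⁻¹' A) := rfl
  rw [this, Real.volume_preimage_mul_left ha0, measure_preimage_add_right]
  gcongr
  rw [abs_inv]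
  refine (ENNReal.ofReal_le_ofReal (inv_anti₀ (by norm_num) ha)).trans ?_
  norm_num

/-- Equivalently, the normalized Lebesgue measure on a dyadic square of side `2 ^ (-m)` projects to
a measure of density at most `2 * 2 ^ m`. Slice along a coordinate axis whose coefficient in `θ` has
absolute value at least `1 / 2`: each slice has length at most `2 * volume A`. -/
lemma volume_square_inter_le {θ : Fin 2 → ℝ} (hθ : θ 0 ^ 2 + θ 1 ^ 2 = 1) (m : ℕ)
    (k : Fin 2 → ℤ) {A : Set ℝ} (hA : MeasurableSet A) :
    volume (dyadicSquare m k ∩ proj θ ⁻¹' A) ≤ 2 * ((2 : ℝ≥0∞) ^ m)⁻¹ * volume A := by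
  set I := dyadicInterval m with hI
  have hIm : ∀ n, MeasurableSet (I n) := measurableSet_dyadicInterval m
  set S : Set (ℝ × ℝ) := {z | z.1 ∈ I (k 0) ∧ z.2 ∈ I (k 1) ∧ θ 0 * z.1 + θ 1 * z.2 ∈ A} with hS
  have hSm : MeasurableSet S := by
    refine (measurable_fst (hIm _)).inter ((measurable_snd (hIm _)).inter ?_)
    exact (show Measurable fun z : ℝ × ℝ => θ 0 * z.1 + θ 1 * z.2 by fun_prop) hA
  have heq : volume (dyadicSquare m k ∩ proj θ ⁻¹' A) = volume S := by
    rw [← (volume_preserving_finTwoArrow ℝ).measure_preimage hSm.nullMeasurableSet]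
    congr 1
    ext x
    simp [hS, hI, dyadicSquare, dyadicInterval, proj, and_assoc]
  have hconst : ∀ n, ∫⁻ t, (I n).indicator (fun _ => 2 * volume A) t
      = 2 * ((2 : ℝ≥0∞) ^ m)⁻¹ * volume A := by
    intro n
    rw [lintegral_indicator_const (hIm n), hI, volume_dyadicInterval]
    ring
  rw [heq]
  have hor : 1 / 2 ≤ |θ 0| ∨ 1 / 2 ≤ |θ 1| := by
    by_contra! h
    nlinarith [sq_abs (θ 0), sq_abs (θ 1), abs_nonneg (θ 0), abs_nonneg (θ 1)]
  rcases hor with h | h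
  · rw [Measure.volume_eq_prod, Measure.prod_apply_symm hSm, ← hconst (k 1)]
    refine lintegral_mono fun y => ?_
    by_cases hy : y ∈ I (k 1)
    · rw [indicator_of_mem hy]
      exact (measure_mono fun x hx => hx.2.2).trans (volume_affine_preimage_le h (θ 1 * y) A)
    · have : (fun x => (x, y)) ⁻¹' S = ∅ := by
        ext x; simp [hS, hy]
      simp [this]
  · rw [Measure.volume_eq_prod, Measure.prod_apply hSm, ← hconst (k 0)]
    refine lintegral_mono fun x => ?_
    by_cases hx : x ∈ I (k 0)
    · rw [indicator_of_mem hx]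
      refine (measure_mono fun y hy => ?_).trans (volume_affine_preimage_le h (θ 0 * x) A)
      simpa [add_comm] using hy.2.2
    · have : Prod.mk x ⁻¹' S = ∅ := by
        ext y; simp [hS, hx]
      simp [this]

/-! ### Integrals of dyadic step functions -/

lemma lintegral_step (m : ℕ) (ρ : Measure ℝ) (G : ℤ → ℝ≥0∞) :
    ∫⁻ t, G ⌊t * 2 ^ m⌋ ∂ρ = ∑' n, G n * ρ (dyadicInterval m n) := by
  rw [← lintegral_map (f := G) (measurable_of_countable G) (measurable_floor_scale m),
    lintegral_countable']
  refine tsum_congr fun n => ?_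
  rw [Measure.map_apply (measurable_floor_scale m) (measurableSet_singleton n)]
  rfl

lemma measurable_step (m : ℕ) (G : ℤ → ℝ≥0∞) : Measurable fun t : ℝ => G ⌊t * 2 ^ m⌋ :=
  (measurable_of_countable G).comp (measurable_floor_scale m)

lemma discretize1_eq_withDensity (m : ℕ) (ρ : Measure ℝ) :
    discretize1 m ρ =
      volume.withDensity fun t => ρ (dyadicInterval m ⌊t * 2 ^ m⌋) * (2 : ℝ≥0∞) ^ m := by
  ext A hA
  rw [withDensity_apply _ hA,
    lintegral_step m _ fun n => ρ (dyadicInterval m n) * (2 : ℝ≥0∞) ^ m,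
    discretize1, Measure.sum_apply _ hA]
  refine tsum_congr fun n => ?_
  rw [Measure.smul_apply, Measure.restrict_apply hA,
    Measure.restrict_apply (measurableSet_dyadicInterval m n), inter_comm, smul_eq_mul]

lemma two_pow_mul_inv (m : ℕ) : (2 : ℝ≥0∞) ^ m * ((2 : ℝ≥0∞) ^ m)⁻¹ = 1 :=
  ENNReal.mul_inv_cancel (by simp) (by finiteness)

lemma L2sq_discretize1 (m : ℕ) (ρ : Measure ℝ) :
    L2sq (discretize1 m ρ) = 2 ^ m * ∑' n, ρ (dyadicInterval m n) ^ 2 := by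
  have h := Measure.rnDeriv_withDensity (volume : Measure ℝ)
    (measurable_step m fun n => ρ (dyadicInterval m n) * (2 : ℝ≥0∞) ^ m)
  rw [L2sq, discretize1_eq_withDensity,
    lintegral_congr_ae (h.mono fun t ht => by rw [ht]),
    lintegral_step m _ fun n => (ρ (dyadicInterval m n) * (2 : ℝ≥0∞) ^ m) ^ 2,
    ← ENNReal.tsum_mul_left]
  refine tsum_congr fun n => ?_
  rw [volume_dyadicInterval]
  calc _ = 2 ^ m * ρ (dyadicInterval m n) ^ 2 * ((2 : ℝ≥0∞) ^ m * ((2 : ℝ≥0∞) ^ m)⁻¹) := by ring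
    _ = _ := by rw [two_pow_mul_inv, mul_one]

/-! ### The two mass comparisons -/

lemma map_discretize2_apply (m : ℕ) (μ : Measure (Fin 2 → ℝ)) (θ : Fin 2 → ℝ) {A : Set ℝ}
    (hA : MeasurableSet A) :
    Measure.map (proj θ) (discretize2 m μ) A =
      ∑' k, μ (dyadicSquare m k) * 2 ^ (2 * m) * volume (dyadicSquare m k ∩ proj θ ⁻¹' A) := by
  have hA' := measurable_proj θ hA
  rw [Measure.map_apply (measurable_proj θ) hA, discretize2, Measure.sum_apply _ hA']
  refine tsum_congr fun k => ?_
  rw [Measure.smul_apply, Measure.restrict_apply hA', inter_comm, smul_eq_mul]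

lemma strip_le (m : ℕ) (μ : Measure (Fin 2 → ℝ)) {θ : Fin 2 → ℝ}
    (hθ : θ 0 ^ 2 + θ 1 ^ 2 = 1) (n : ℤ) :
    Measure.map (proj θ) μ (dyadicInterval m n) ≤
      ∑ j ∈ Finset.Icc (-2 : ℤ) 2,
        Measure.map (proj θ) (discretize2 m μ) (dyadicInterval m (n + j)) := by
  refine le_trans ?_ (measure_fatInterval_le _ m n)
  have hI := measurableSet_dyadicInterval m n
  rw [Measure.map_apply (measurable_proj θ) hI,
    measure_eq_tsum_dyadicSquare m μ (measurable_proj θ hI),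
    map_discretize2_apply m μ θ (measurableSet_fatInterval m n)]
  refine ENNReal.tsum_le_tsum fun k => ?_
  rcases (dyadicSquare m k ∩ proj θ ⁻¹' dyadicInterval m n).eq_empty_or_nonempty with h | ⟨x, hx⟩
  · simp [h]
  · rw [inter_eq_left.2 (square_subset_strip hθ hx.1 hx.2), volume_dyadicSquare, mul_assoc,
      two_pow_mul_inv, mul_one]
    exact measure_mono inter_subset_left

lemma map_discretize2_inter_le (m : ℕ) (μ : Measure (Fin 2 → ℝ)) {θ : Fin 2 → ℝ}
    (hθ : θ 0 ^ 2 + θ 1 ^ 2 = 1) (n : ℤ) {A : Set ℝ} (hA : MeasurableSet A)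
    (hAn : A ⊆ dyadicInterval m n) :
    Measure.map (proj θ) (discretize2 m μ) A ≤
      2 * 2 ^ m * (∑ j ∈ Finset.Icc (-2 : ℤ) 2,
        Measure.map (proj θ) μ (dyadicInterval m (n + j))) * volume A := by
  have hJ := measurableSet_fatInterval m n
  calc Measure.map (proj θ) (discretize2 m μ) A
      ≤ ∑' k, 2 * 2 ^ m * volume A * μ (dyadicSquare m k ∩ proj θ ⁻¹' fatInterval m n) := by
        rw [map_discretize2_apply m μ θ hA]
        refine ENNReal.tsum_le_tsum fun k => ?_
        rcases (dyadicSquare m k ∩ proj θ ⁻¹' A).eq_empty_or_nonempty with h | ⟨x, hx⟩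
        · simp [h]
        · rw [inter_eq_left.2 (square_subset_strip hθ hx.1 (hAn hx.2))]
          calc _ ≤ μ (dyadicSquare m k) * 2 ^ (2 * m) * (2 * ((2 : ℝ≥0∞) ^ m)⁻¹ * volume A) := by
                gcongr
                exact volume_square_inter_le hθ m k hA
            _ = 2 * 2 ^ m * volume A * μ (dyadicSquare m k) * (2 ^ m * ((2 : ℝ≥0∞) ^ m)⁻¹) := by
                ring
            _ = _ := by rw [two_pow_mul_inv, mul_one]
    _ = 2 * 2 ^ m * volume A * Measure.map (proj θ) μ (fatInterval m n) := by
        rw [ENNReal.tsum_mul_left, Measure.map_apply (measurable_proj θ) hJ,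
          ← measure_eq_tsum_dyadicSquare m μ (measurable_proj θ hJ)]
    _ ≤ 2 * 2 ^ m * volume A * ∑ j ∈ Finset.Icc (-2 : ℤ) 2,
          Measure.map (proj θ) μ (dyadicInterval m (n + j)) := by
        gcongr
        exact measure_fatInterval_le _ m n
    _ = _ := by ring

lemma map_discretize2_le (m : ℕ) (μ : Measure (Fin 2 → ℝ)) {θ : Fin 2 → ℝ}
    (hθ : θ 0 ^ 2 + θ 1 ^ 2 = 1) :
    Measure.map (proj θ) (discretize2 m μ) ≤
      volume.withDensity fun t => 2 * 2 ^ m * ∑ j ∈ Finset.Icc (-2 : ℤ) 2,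
        Measure.map (proj θ) μ (dyadicInterval m (⌊t * 2 ^ m⌋ + j)) := by
  refine Measure.le_iff.2 fun A hA => ?_
  rw [withDensity_apply _ hA, lintegral_step m _ fun n => 2 * 2 ^ m *
    ∑ j ∈ Finset.Icc (-2 : ℤ) 2, Measure.map (proj θ) μ (dyadicInterval m (n + j))]
  have hcover : A ⊆ ⋃ n, A ∩ dyadicInterval m n := fun t ht =>
    mem_iUnion.2 ⟨⌊t * 2 ^ m⌋, ht, rfl⟩
  refine (measure_mono hcover).trans ((measure_iUnion_le _).trans ?_)
  refine ENNReal.tsum_le_tsum fun n => ?_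
  have hI := measurableSet_dyadicInterval m n
  rw [Measure.restrict_apply hI, inter_comm (dyadicInterval m n)]
  exact map_discretize2_inter_le m μ hθ n (hA.inter hI) inter_subset_right

/-! ### Square sums -/

lemma sq_sum_le (s : Finset ℤ) (b : ℤ → ℝ≥0∞) :
    (∑ j ∈ s, b j) ^ 2 ≤ (s.card : ℝ≥0∞) ^ 2 * ∑ j ∈ s, b j ^ 2 := by
  rcases s.eq_empty_or_nonempty with rfl | hs
  · simp
  -- the sum is at most its cardinality times its largest term
  obtain ⟨i, hi, hmax⟩ := s.exists_max_image b hs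
  calc (∑ j ∈ s, b j) ^ 2 ≤ (s.card * b i) ^ 2 := by
        gcongr
        simpa using Finset.sum_le_card_nsmul s b (b i) hmax
    _ = (s.card : ℝ≥0∞) ^ 2 * b i ^ 2 := mul_pow _ _ _
    _ ≤ _ := by
        gcongr
        exact Finset.single_le_sum (f := fun j => b j ^ 2) (fun _ _ => zero_le) hi

lemma card_window : (Finset.Icc (-2 : ℤ) 2).card = 5 := rfl

/-- The operator `b ↦ ∑_{|j| ≤ 2} b (· + j)` is bounded on `ℓ²(ℤ)`. -/
lemma tsum_sq_window_le (b : ℤ → ℝ≥0∞) :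
    ∑' n, (∑ j ∈ Finset.Icc (-2 : ℤ) 2, b (n + j)) ^ 2 ≤ 125 * ∑' n, b n ^ 2 := by
  calc ∑' n, (∑ j ∈ Finset.Icc (-2 : ℤ) 2, b (n + j)) ^ 2
      ≤ ∑' n, 25 * ∑ j ∈ Finset.Icc (-2 : ℤ) 2, b (n + j) ^ 2 := by
        refine ENNReal.tsum_le_tsum fun n => (sq_sum_le _ fun j => b (n + j)).trans_eq ?_
        rw [card_window]
        norm_num
    _ = 25 * ∑ j ∈ Finset.Icc (-2 : ℤ) 2, ∑' n, b (n + j) ^ 2 := by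
        rw [ENNReal.tsum_mul_left, Summable.tsum_finsetSum fun _ _ => ENNReal.summable]
    _ = 25 * ∑ j ∈ Finset.Icc (-2 : ℤ) 2, ∑' n, b n ^ 2 := by
        congr 1
        exact Finset.sum_congr rfl fun j _ => (Equiv.addRight j).tsum_eq fun n => b n ^ 2
    _ = 125 * ∑' n, b n ^ 2 := by
        rw [Finset.sum_const, nsmul_eq_mul, ← mul_assoc, card_window]
        norm_num

lemma sq_setLIntegral_le {f : ℝ → ℝ≥0∞} (hf : Measurable f) (A : Set ℝ) :
    (∫⁻ t in A, f t) ^ 2 ≤ volume A * ∫⁻ t in A, f t ^ 2 := by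
  have h := ENNReal.lintegral_mul_le_Lp_mul_Lq (volume.restrict A) Real.HolderConjugate.two_two
    hf.aemeasurable (g := fun _ => 1) aemeasurable_const
  have hsq : ∀ x : ℝ≥0∞, (x ^ (1 / 2 : ℝ)) ^ 2 = x := fun x => by
    rw [← ENNReal.rpow_natCast, ← ENNReal.rpow_mul]; norm_num
  calc _ ≤ _ := pow_le_pow_left₀ zero_le (by simpa using h) 2
    _ = _ := by
      rw [mul_pow, ← one_div, hsq, hsq, mul_comm]

/-! ### Conclusion -/

lemma L2sq_map_discretize2_le (m : ℕ) (μ : Measure (Fin 2 → ℝ)) {θ : Fin 2 → ℝ}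
    (hθ : θ 0 ^ 2 + θ 1 ^ 2 = 1) :
    L2sq (Measure.map (proj θ) (discretize2 m μ)) ≤
      500 * L2sq (discretize1 m (Measure.map (proj θ) μ)) := by
  set σ := Measure.map (proj θ) (discretize2 m μ)
  set p : ℤ → ℝ≥0∞ := fun n => Measure.map (proj θ) μ (dyadicInterval m n)
  set G : ℤ → ℝ≥0∞ := fun n => 2 * 2 ^ m * ∑ j ∈ Finset.Icc (-2 : ℤ) 2, p (n + j)
  have hle : σ ≤ volume.withDensity fun t => G ⌊t * 2 ^ m⌋ := map_discretize2_le m μ hθ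
  have hae : σ.rnDeriv volume ≤ᵐ[volume] fun t => G ⌊t * 2 ^ m⌋ := by
    refine ae_le_of_forall_setLIntegral_le_of_sigmaFinite (Measure.measurable_rnDeriv _ _)
      fun A hA _ => ?_
    rw [← withDensity_apply (fun t => G ⌊t * 2 ^ m⌋) hA]
    exact (Measure.setLIntegral_rnDeriv_le A).trans (hle A)
  calc L2sq σ ≤ ∫⁻ t, G ⌊t * 2 ^ m⌋ ^ 2 :=
        lintegral_mono_ae (hae.mono fun t ht => pow_le_pow_left₀ zero_le ht 2)
    _ = ∑' n, 4 * 2 ^ m * (∑ j ∈ Finset.Icc (-2 : ℤ) 2, p (n + j)) ^ 2 := by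
        rw [lintegral_step m _ fun n => G n ^ 2]
        refine tsum_congr fun n => ?_
        rw [volume_dyadicInterval]
        calc _ = 4 * 2 ^ m * (∑ j ∈ Finset.Icc (-2 : ℤ) 2, p (n + j)) ^ 2 *
              (2 ^ m * ((2 : ℝ≥0∞) ^ m)⁻¹) := by simp only [G]; ring
          _ = _ := by rw [two_pow_mul_inv, mul_one]
    _ ≤ 4 * 2 ^ m * (125 * ∑' n, p n ^ 2) := by
        rw [ENNReal.tsum_mul_left]
        gcongr
        exact tsum_sq_window_le p
    _ = 500 * L2sq (discretize1 m (Measure.map (proj θ) μ)) := by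
        rw [L2sq_discretize1]
        simp only [p]
        ring

lemma L2sq_discretize1_le (m : ℕ) (μ : Measure (Fin 2 → ℝ)) {θ : Fin 2 → ℝ}
    (hθ : θ 0 ^ 2 + θ 1 ^ 2 = 1) :
    L2sq (discretize1 m (Measure.map (proj θ) μ)) ≤
      125 * L2sq (Measure.map (proj θ) (discretize2 m μ)) := by
  set σ := Measure.map (proj θ) (discretize2 m μ) with hσ
  have : SFinite σ := by rw [hσ, discretize2]; infer_instance
  have hac : σ ≪ volume :=
    (Measure.absolutelyContinuous_of_le (map_discretize2_le m μ hθ)).trans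
      (withDensity_absolutelyContinuous _ _)
  have hmeas : Measurable (σ.rnDeriv volume) := Measure.measurable_rnDeriv _ _
  have hsum : ∑' n, σ (dyadicInterval m n) ^ 2 ≤ ((2 : ℝ≥0∞) ^ m)⁻¹ * L2sq σ := by
    calc ∑' n, σ (dyadicInterval m n) ^ 2
        ≤ ∑' n, ((2 : ℝ≥0∞) ^ m)⁻¹ * ∫⁻ t in dyadicInterval m n, σ.rnDeriv volume t ^ 2 := by
          refine ENNReal.tsum_le_tsum fun n => ?_
          rw [← Measure.setLIntegral_rnDeriv hac, ← volume_dyadicInterval m n]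
          exact sq_setLIntegral_le hmeas _
      _ = ((2 : ℝ≥0∞) ^ m)⁻¹ * L2sq σ := by
          have hU : ⋃ n, dyadicInterval m n = univ :=
            eq_univ_of_forall fun t => mem_iUnion.2 ⟨⌊t * 2 ^ m⌋, rfl⟩
          rw [ENNReal.tsum_mul_left, ← lintegral_iUnion (measurableSet_dyadicInterval m), hU,
            setLIntegral_univ, L2sq]
          exact fun k l hkl => Set.disjoint_left.2 fun t ht ht' => hkl (ht.symm.trans ht')
  calc L2sq (discretize1 m (Measure.map (proj θ) μ))
      ≤ 2 ^ m * ∑' n, (∑ j ∈ Finset.Icc (-2 : ℤ) 2, σ (dyadicInterval m (n + j))) ^ 2 := by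
        rw [L2sq_discretize1]
        gcongr with n
        exact strip_le m μ hθ n
    _ ≤ 2 ^ m * (125 * (((2 : ℝ≥0∞) ^ m)⁻¹ * L2sq σ)) := by
        gcongr
        refine (tsum_sq_window_le fun n => σ (dyadicInterval m n)).trans ?_
        gcongr
    _ = 125 * L2sq σ * (2 ^ m * ((2 : ℝ≥0∞) ^ m)⁻¹) := by ring
    _ = 125 * L2sq σ := by rw [two_pow_mul_inv, mul_one]

/-- There are absolute constants `c, C > 0` such that for every Borel
probability measure `μ` on `[0,1)²`, every `θ ∈ S¹` and every `m ∈ ℕ`: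
`c·‖Π_θ(μ^{(m)})‖₂² ≤ ‖(μ_θ)^{(m)}‖₂² ≤ C·‖Π_θ(μ^{(m)})‖₂²`. -/
theorem statement6 :
    ∃ c C : ℝ≥0∞, 0 < c ∧ C ≠ ⊤ ∧
      ∀ μ : Measure (Fin 2 → ℝ), IsProbabilityMeasure μ → μ unitSquareᶜ = 0 →
        ∀ θ : Fin 2 → ℝ, θ 0 ^ 2 + θ 1 ^ 2 = 1 → ∀ m : ℕ,
          c * L2sq (Measure.map (proj θ) (discretize2 m μ)) ≤
              L2sq (discretize1 m (Measure.map (proj θ) μ)) ∧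
          L2sq (discretize1 m (Measure.map (proj θ) μ)) ≤
            C * L2sq (Measure.map (proj θ) (discretize2 m μ)) := by
  refine ⟨500⁻¹, 125, by simp, by simp, fun μ _ _ θ hθ m => ⟨?_, L2sq_discretize1_le m μ hθ⟩⟩
  rw [mul_comm, ← div_eq_mul_inv]
  exact ENNReal.div_le_of_le_mul' (L2sq_map_discretize2_le m μ hθ)
end
end

section
/- Let d ≥ 1, let μ be a Borel probability measure on [0,1)^d, and let y ∈ ℝ^d \ supp(μ). Let m_j ≤ m_{j+1} be nonnegative integers with d_j := m_{j+1} − m_j ≤ m_j + 1. Then there is a constant C > 0, depending only on dist(y, supp(μ)), such that for every Q ∈ D_{m_j} with μ(Q) > 0 and every x_Q ∈ Q: |H(Δ_y(μ_Q), D_{m_{j+1}} | D_{m_j}) − H(Π_{θ(y,x_Q)}(μ_Q), D_{m_{j+1}} | D_{m_j})| ≤ C, where Δ_y(μ_Q) is the pushforward of μ_Q under z ↦ |z−y| and Π_{θ(y,x_Q)}(μ_Q) is the pushforward under the linear map z ↦ θ(y,x_Q)·z, and the conditional entropies on ℝ are with respect to dyadic intervals. -/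
/-! Write `r = dist(y, supp μ)`, `P = μ_Q`, `f z = |z - y|`, `g z = θ(y, x_Q) · z`.

By the chain rule (`condEntropyI_eq`) each conditional entropy is the difference of the entropies
of the labels `⌊f 2^k⌋` (resp. `⌊g 2^k⌋`) at the fine and at the coarse level. Entropies are
compared by a single principle (`natEntropy_le`): if every value of `Y` leaves at most `N` possible
values of `X`, then `H(X) ≤ H(Y) + log N`.

* If `Q` is large, `d 4^{-m_j} > r² / 4`, then `m_j` is bounded in terms of `d` and `r`. Both
  conditional entropies lie in `[0, m_{j+1} - m_j]` (`condEntropyI_map_bounds`), and this length is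
  at most `m_j + 1`. This case also covers points `x_Q` close or equal to `y`.
* If `Q` is small, its diameter is at most `r / 2` and it meets the support, so `|y - x_Q| ≥ r / 2`.
  The second-order estimate `abs_norm_sub_inner_le` gives
  `|f + g - θ · y| ≤ |x_Q - z|² / (2 |y - x_Q|) ≤ d 4^{-m_j} / r ≤ (2d / r) 2^{-m_{j+1}}` on `Q`,
  the last step because `m_{j+1} ≤ 2 m_j + 1`. Hence, at both levels, the label of either function
  determines that of the other up to a bounded number of choices (`natEntropy_floor_le`).
-/


open MeasureTheory Filter Set
open scoped ENNReal Topology RealInnerProductSpace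

noncomputable section

/-- The half-open dyadic cube of generation `k` in Euclidean `ℝ^d`. -/
def eCube (d k : ℕ) (n : Fin d → ℤ) : Set (EuclideanSpace ℝ (Fin d)) :=
  {x | ∀ i, ⌊x i * 2 ^ k⌋ = n i}

/-- The unit cube `[0,1)^d`. -/
def eUnitCube (d : ℕ) : Set (EuclideanSpace ℝ (Fin d)) :=
  {x | ∀ i, x i ∈ Set.Ico (0 : ℝ) 1}

/-- The (topological) support of a measure on a metric space: the set of points all of
whose balls have positive measure. -/
def msupport {E : Type*} [MeasurableSpace E] [PseudoMetricSpace E]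
    (μ : Measure E) : Set E :=
  {x | ∀ r : ℝ, 0 < r → 0 < μ (Metric.ball x r)}

/-- Shannon entropy (base 2) of a measure on `ℝ` with respect to the dyadic partition
`D_k`: `H(ν, D_k) = Σ_{I ∈ D_k} −ν(I) log₂ ν(I)`. -/
def entropyI (k : ℕ) (ν : Measure ℝ) : ℝ :=
  ∑' n : ℤ,
    -((ν (dyadicInterval k n)).toReal * Real.logb 2 (ν (dyadicInterval k n)).toReal)

/-- Conditional entropy `H(ν, D_kf | D_kc) = Σ_{I ∈ D_kc, ν(I)>0} ν(I) H(ν_I, D_kf)`. -/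
def condEntropyI (kf kc : ℕ) (ν : Measure ℝ) : ℝ :=
  ∑' n : ℤ,
    (ν (dyadicInterval kc n)).toReal *
      entropyI kf ((ν (dyadicInterval kc n))⁻¹ • ν.restrict (dyadicInterval kc n))

/-- The direction `θ(y,x) = (y−x)/|y−x| ∈ S^{d−1}` determined by `y` and `x`. -/
def dirTheta {d : ℕ} (y x : EuclideanSpace ℝ (Fin d)) : EuclideanSpace ℝ (Fin d) :=
  ‖y - x‖⁻¹ • (y - x)

/-! ### Entropy of integer-valued variables -/

/-- Shannon entropy, in nats, of the law of the integer-valued variable `X` under `P`. -/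
def natEntropy {E : Type*} [MeasurableSpace E] (P : Measure E) (X : E → ℤ) : ℝ :=
  ∑' n : ℤ, Real.negMulLog (P.real {z | X z = n})

lemma negMulLog_sum_le {ι : Type*} (s : Finset ι) (x : ι → ℝ) (hx : ∀ i ∈ s, 0 ≤ x i) :
    Real.negMulLog (∑ i ∈ s, x i) ≤ ∑ i ∈ s, Real.negMulLog (x i) := by
  have h : Real.negMulLog (∑ i ∈ s, x i) = ∑ i ∈ s, -(x i * Real.log (∑ j ∈ s, x j)) := by
    rw [Real.negMulLog, Finset.sum_neg_distrib, ← Finset.sum_mul, neg_mul]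
  rw [h]
  refine Finset.sum_le_sum fun i hi => ?_
  rw [Real.negMulLog, neg_mul, neg_le_neg_iff]
  rcases (hx i hi).eq_or_lt with h0 | h0
  · simp [← h0]
  · exact mul_le_mul_of_nonneg_left
      (Real.log_le_log h0 (Finset.single_le_sum hx hi)) h0.le

/-- Jensen's inequality for `t ↦ -t log t`: at most `N` masses have entropy at most that
of `N` equal masses. -/
lemma sum_negMulLog_le {ι : Type*} (s : Finset ι) (x : ι → ℝ) (hx : ∀ i ∈ s, 0 ≤ x i)
    (N : ℕ) (hs : s.card ≤ N) :
    ∑ i ∈ s, Real.negMulLog (x i) ≤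
      Real.negMulLog (∑ i ∈ s, x i) + (∑ i ∈ s, x i) * Real.log N := by
  rcases s.eq_empty_or_nonempty with rfl | hne
  · simp
  have hc : 0 < (s.card : ℝ) := by exact_mod_cast hne.card_pos
  have hS : 0 ≤ ∑ i ∈ s, x i := Finset.sum_nonneg hx
  have hJ := Real.concaveOn_negMulLog.le_map_sum (t := s) (w := fun _ => (s.card : ℝ)⁻¹) (p := x)
    (fun _ _ => by positivity) (by simp [hc.ne']) (fun i hi => hx i hi)
  simp only [smul_eq_mul, ← Finset.mul_sum] at hJ
  have h1 : ∑ i ∈ s, Real.negMulLog (x i) ≤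
      Real.negMulLog (∑ i ∈ s, x i) + (∑ i ∈ s, x i) * Real.log s.card := by
    rw [inv_mul_le_iff₀ hc] at hJ
    refine hJ.trans_eq ?_
    rcases hS.eq_or_lt with h0 | h0
    · simp [← h0]
    · rw [Real.negMulLog, Real.negMulLog, Real.log_mul (by positivity) h0.ne', Real.log_inv]
      field_simp
      ring
  refine h1.trans ?_
  gcongr

/-- Total probability over the finitely many values of `Y`. -/
lemma real_eq_sum_inter {E : Type*} [MeasurableSpace E] (P : Measure E) [IsFiniteMeasure P]
    {Y : E → ℤ} (hY : Measurable Y) (B : Finset ℤ) (hB : ∀ᵐ z ∂P, Y z ∈ B)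
    {s : Set E} (hs : MeasurableSet s) :
    P.real s = ∑ b ∈ B, P.real (s ∩ {z | Y z = b}) := by
  have hm : ∀ b, MeasurableSet {z | Y z = b} := fun b => hY (measurableSet_singleton b)
  rw [← measureReal_biUnion_finset]
  · refine measureReal_congr ?_
    filter_upwards [hB] with z hz
    simp only [eq_iff_iff]
    change z ∈ s ↔ z ∈ ⋃ b ∈ B, s ∩ {z | Y z = b}
    simp [hz]
  · intro a _ b _ hab
    rw [Function.onFun, Set.disjoint_left]
    rintro z ⟨_, h1⟩ ⟨_, h2⟩
    exact hab (h1.symm.trans h2)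
  · exact fun b _ => hs.inter (hm b)

lemma natEntropy_eq_sum {E : Type*} [MeasurableSpace E] (P : Measure E)
    {X : E → ℤ} (A : Finset ℤ) (hA : ∀ᵐ z ∂P, X z ∈ A) :
    natEntropy P X = ∑ a ∈ A, Real.negMulLog (P.real {z | X z = a}) := by
  refine tsum_eq_sum fun a ha => ?_
  have : P {z | X z = a} = 0 := by
    refine measure_mono_null (t := {z | ¬ X z ∈ A}) ?_ hA
    rintro z rfl
    exact ha
  simp [measureReal_def, this]

/-- `H(X) ≤ H(Y) + log N` when each value of `Y` leaves at most `N` values of `X` possible.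
This is `H(X) ≤ H(X, Y) = H(Y) + H(X | Y)`, written out for the joint masses. -/
lemma natEntropy_le {E : Type*} [MeasurableSpace E] (P : Measure E) [IsProbabilityMeasure P]
    {X Y : E → ℤ} (hX : Measurable X) (hY : Measurable Y) (A B : Finset ℤ)
    (hA : ∀ᵐ z ∂P, X z ∈ A) (hB : ∀ᵐ z ∂P, Y z ∈ B) (N : ℕ)
    (h : ∀ b, ∃ S : Finset ℤ, S.card ≤ N ∧ ∀ᵐ z ∂P, Y z = b → X z ∈ S) :
    natEntropy P X ≤ natEntropy P Y + Real.log N := by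
  have hmX : ∀ b, MeasurableSet {z | X z = b} := fun b => hX (measurableSet_singleton b)
  have hmY : ∀ b, MeasurableSet {z | Y z = b} := fun b => hY (measurableSet_singleton b)
  rw [natEntropy_eq_sum P A hA, natEntropy_eq_sum P B hB]
  set q : ℤ → ℤ → ℝ := fun a b => P.real ({z | X z = a} ∩ {z | Y z = b}) with hq
  have h1 : ∑ a ∈ A, Real.negMulLog (P.real {z | X z = a}) ≤
      ∑ a ∈ A, ∑ b ∈ B, Real.negMulLog (q a b) := by
    refine Finset.sum_le_sum fun a _ => ?_
    rw [real_eq_sum_inter P hY B hB (hmX a)]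
    exact negMulLog_sum_le _ _ fun _ _ => measureReal_nonneg
  have h2 : ∀ b, ∑ a ∈ A, Real.negMulLog (q a b) ≤
      Real.negMulLog (P.real {z | Y z = b}) + P.real {z | Y z = b} * Real.log N := by
    intro b
    obtain ⟨S, hS, hSX⟩ := h b
    have hz : ∀ a ∈ A, a ∉ A ∩ S → q a b = 0 := by
      intro a ha haS
      have : P ({z | X z = a} ∩ {z | Y z = b}) = 0 := by
        refine measure_mono_null (t := {z | ¬ (Y z = b → X z ∈ S)}) ?_ hSX
        rintro z ⟨rfl, hzY⟩ hcon
        exact haS (Finset.mem_inter.2 ⟨ha, hcon hzY⟩)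
      simp [hq, measureReal_def, this]
    have e1 : ∑ a ∈ A, Real.negMulLog (q a b) = ∑ a ∈ A ∩ S, Real.negMulLog (q a b) :=
      (Finset.sum_subset Finset.inter_subset_left fun a ha haS => by
        simp [hz a ha haS]).symm
    have e2 : P.real {z | Y z = b} = ∑ a ∈ A ∩ S, q a b := by
      rw [real_eq_sum_inter P hX A hA (hmY b)]
      rw [Finset.sum_subset (s₂ := A) Finset.inter_subset_left hz]
      exact Finset.sum_congr rfl fun a _ => by rw [Set.inter_comm]
    rw [e1, e2]
    exact sum_negMulLog_le _ _ (fun _ _ => measureReal_nonneg) N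
      ((Finset.card_le_card Finset.inter_subset_right).trans hS)
  have h3 : ∑ b ∈ B, P.real {z | Y z = b} = 1 := by
    have := real_eq_sum_inter P hY B hB MeasurableSet.univ
    simpa using this.symm
  calc _ ≤ _ := h1
    _ = ∑ b ∈ B, ∑ a ∈ A, Real.negMulLog (q a b) := Finset.sum_comm
    _ ≤ ∑ b ∈ B, (Real.negMulLog (P.real {z | Y z = b}) + P.real {z | Y z = b} * Real.log N) :=
        Finset.sum_le_sum fun b _ => h2 b
    _ = _ := by rw [Finset.sum_add_distrib, ← Finset.sum_mul, h3, one_mul]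

/-! ### Dyadic partitions of the line -/

lemma floor_coarse {kc kf : ℕ} (hk : kc ≤ kf) (t : ℝ) :
    ⌊t * 2 ^ kc⌋ = ⌊t * 2 ^ kf⌋ / (2 ^ (kf - kc) : ℕ) := by
  rw [← Int.floor_div_natCast]
  congr 1
  rw [eq_div_iff (by positivity)]
  push_cast
  rw [mul_assoc, ← pow_add, Nat.add_sub_cancel' hk]

/-- The level-`kf` intervals refine the level-`kc` ones, the parent having label
`k / 2 ^ (kf - kc)`. -/
lemma dyadicInterval_inter {kc kf : ℕ} (hk : kc ≤ kf) (n k : ℤ) :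
    dyadicInterval kf k ∩ dyadicInterval kc n =
      if k / (2 ^ (kf - kc) : ℕ) = n then dyadicInterval kf k else ∅ := by
  ext t
  split_ifs with h <;> simp only [dyadicInterval, mem_inter_iff, mem_ofPred_eq, floor_coarse hk]
  · constructor
    · exact fun h => h.1
    · rintro rfl; exact ⟨rfl, h⟩
  · simp only [mem_empty_iff_false, iff_false]
    rintro ⟨rfl, h'⟩; exact h h'

lemma measurable_floor_dyadic (k : ℕ) : Measurable fun t : ℝ => ⌊t * 2 ^ k⌋ :=
  Int.measurable_floor.comp (measurable_id.mul_const _)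

lemma entropyI_eq {E : Type*} [MeasurableSpace E] (P : Measure E) {f : E → ℝ}
    (hf : Measurable f) (k : ℕ) :
    entropyI k (Measure.map f P) = natEntropy P (fun z => ⌊f z * 2 ^ k⌋) / Real.log 2 := by
  rw [entropyI, natEntropy, ← tsum_div_const]
  refine tsum_congr fun n => ?_
  have hm : MeasurableSet (dyadicInterval k n) :=
    measurable_floor_dyadic k (measurableSet_singleton n)
  rw [Measure.map_apply hf hm]
  change -(P.real {z | ⌊f z * 2 ^ k⌋ = n} * Real.logb 2 (P.real {z | ⌊f z * 2 ^ k⌋ = n})) = _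
  rw [Real.negMulLog, Real.logb]
  ring

/-- The chain rule `H(ν, D_kf | D_kc) = H(ν, D_kf) - H(ν, D_kc)`, for `ν` charging finitely many
dyadic intervals, so that all the series are finite sums. -/
lemma condEntropyI_eq {kc kf : ℕ} (hk : kc ≤ kf) (ν : Measure ℝ) [IsFiniteMeasure ν]
    (B : Finset ℤ) (hB : ∀ᵐ t ∂ν, ⌊t * 2 ^ kf⌋ ∈ B) :
    condEntropyI kf kc ν = entropyI kf ν - entropyI kc ν := by
  classical
  set φ : ℤ → ℤ := fun k => k / (2 ^ (kf - kc) : ℕ) with hφ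
  have hA : ∀ᵐ t ∂ν, ⌊t * 2 ^ kc⌋ ∈ B.image φ := by
    filter_upwards [hB] with t ht
    rw [floor_coarse hk]
    exact Finset.mem_image_of_mem φ ht
  have hm : ∀ k n, MeasurableSet (dyadicInterval k n) := fun k n =>
    measurable_floor_dyadic k (measurableSet_singleton n)
  have hl : Real.log 2 ≠ 0 := (Real.log_pos one_lt_two).ne'
  have hE : ∀ k, entropyI k ν = natEntropy ν (fun t => ⌊t * 2 ^ k⌋) / Real.log 2 := fun k => by
    simpa using entropyI_eq ν (f := id) measurable_id k
  -- `q n k` is the mass of the fine interval `k` if it lies inside the coarse interval `n`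
  set q : ℤ → ℤ → ℝ := fun n k => ν.real (dyadicInterval kf k ∩ dyadicInterval kc n) with hq
  have hqB : ∀ n, ∀ k ∉ B, q n k = 0 := by
    intro n k hkB
    have : ν (dyadicInterval kf k ∩ dyadicInterval kc n) = 0 := by
      refine measure_mono_null (t := {t | ¬ ⌊t * 2 ^ kf⌋ ∈ B}) ?_ hB
      rintro t ⟨rfl, _⟩
      exact hkB
    simp [hq, measureReal_def, this]
  have hqs : ∀ n, ν.real (dyadicInterval kc n) = ∑ k ∈ B, q n k := by
    intro n
    rw [real_eq_sum_inter ν (measurable_floor_dyadic kf) B hB (hm kc n)]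
    exact Finset.sum_congr rfl fun k _ => by rw [Set.inter_comm]; rfl
  have hterm : ∀ n, (ν (dyadicInterval kc n)).toReal *
      entropyI kf ((ν (dyadicInterval kc n))⁻¹ • ν.restrict (dyadicInterval kc n)) =
      (∑ k ∈ B, Real.negMulLog (q n k) -
        Real.negMulLog (ν.real (dyadicInterval kc n))) / Real.log 2 := by
    intro n
    change ν.real (dyadicInterval kc n) * _ = _
    have h0 : ∀ k, ((((ν (dyadicInterval kc n))⁻¹ • ν.restrict (dyadicInterval kc n))
        (dyadicInterval kf k)).toReal) = (ν.real (dyadicInterval kc n))⁻¹ * q n k := by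
      intro k
      rw [Measure.smul_apply, Measure.restrict_apply (hm kf k), smul_eq_mul, ENNReal.toReal_mul,
        ENNReal.toReal_inv]
      rfl
    rw [entropyI]
    simp only [h0]
    rw [tsum_eq_sum (s := B) (fun k hkB => by simp [hqB n k hkB])]
    by_cases hp : ν.real (dyadicInterval kc n) = 0
    · have : ∀ k ∈ B, q n k = 0 :=
        (Finset.sum_eq_zero_iff_of_nonneg fun _ _ => measureReal_nonneg).1
          ((hqs n).symm.trans hp)
      have h1 : ∑ k ∈ B, Real.negMulLog (q n k) = 0 :=
        Finset.sum_eq_zero fun k hk' => by simp [this k hk']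
      simp [hp, h1]
    · have e : Real.negMulLog (ν.real (dyadicInterval kc n)) =
          ∑ k ∈ B, -(q n k * Real.log (ν.real (dyadicInterval kc n))) := by
        rw [Finset.sum_neg_distrib, ← Finset.sum_mul, ← hqs, Real.negMulLog, neg_mul]
      rw [e, ← Finset.sum_sub_distrib, Finset.mul_sum, Finset.sum_div]
      refine Finset.sum_congr rfl fun k _ => ?_
      by_cases hk0 : q n k = 0
      · simp [hk0]
      · rw [Real.logb, Real.log_mul (inv_ne_zero hp) hk0, Real.log_inv, Real.negMulLog]
        field_simp
        ring
  rw [condEntropyI, tsum_congr hterm, tsum_div_const, hE, hE, ← sub_div]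
  congr 1
  rw [tsum_eq_sum (s := B.image φ), Finset.sum_sub_distrib, natEntropy_eq_sum ν _ hA,
    natEntropy_eq_sum ν _ hB]
  · congr 1
    rw [Finset.sum_comm]
    refine Finset.sum_congr rfl fun k hkB => ?_
    rw [Finset.sum_eq_single (φ k)]
    · simp only [hq, dyadicInterval_inter hk, hφ, if_true]; rfl
    · intro n _ hn
      have : q n k = 0 := by
        simp only [hq]
        rw [dyadicInterval_inter hk, if_neg (Ne.symm hn)]
        simp
      simp [this]
    · intro h
      exact absurd (Finset.mem_image_of_mem φ hkB) h
  · intro n hn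
    have : ν (dyadicInterval kc n) = 0 := by
      refine measure_mono_null (t := {t | ¬ ⌊t * 2 ^ kc⌋ ∈ B.image φ}) ?_ hA
      rintro t rfl
      exact hn
    have hp : ν.real (dyadicInterval kc n) = 0 := by simp [measureReal_def, this]
    have h0 : ∀ k ∈ B, q n k = 0 :=
      (Finset.sum_eq_zero_iff_of_nonneg fun _ _ => measureReal_nonneg).1
        ((hqs n).symm.trans hp)
    rw [hp, Finset.sum_eq_zero fun k hk' => by simp [h0 k hk']]
    simp

/-- For a bounded function, the dyadic level-`k` label takes finitely many values. -/
lemma exists_finset_floor {E : Type*} [MeasurableSpace E] {P : Measure E} {f : E → ℝ}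
    {R : ℝ} (h : ∀ᵐ z ∂P, |f z| ≤ R) (k : ℕ) :
    ∃ A : Finset ℤ, ∀ᵐ z ∂P, ⌊f z * 2 ^ k⌋ ∈ A := by
  refine ⟨Finset.Icc ⌊-R * 2 ^ k⌋ ⌊R * 2 ^ k⌋, ?_⟩
  filter_upwards [h] with z hz
  rw [abs_le] at hz
  rw [Finset.mem_Icc]
  constructor <;> apply Int.floor_le_floor <;> gcongr <;> linarith

/-- If `f + g` is constant up to an error `K 2^{-k}`, then knowing the dyadic interval of level
`k` containing `g` leaves at most `2K + 2` possibilities for `f`. -/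
lemma natEntropy_floor_le {E : Type*} [MeasurableSpace E] (P : Measure E) [IsProbabilityMeasure P]
    {f g : E → ℝ} (hf : Measurable f) (hg : Measurable g) {R : ℝ}
    (hfR : ∀ᵐ z ∂P, |f z| ≤ R) (hgR : ∀ᵐ z ∂P, |g z| ≤ R) (k K : ℕ) (c : ℝ)
    (h : ∀ᵐ z ∂P, |f z + g z - c| * 2 ^ k ≤ K) :
    natEntropy P (fun z => ⌊f z * 2 ^ k⌋) ≤
      natEntropy P (fun z => ⌊g z * 2 ^ k⌋) + Real.log (2 * K + 2) := by
  obtain ⟨A, hA⟩ := exists_finset_floor hfR k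
  obtain ⟨B, hB⟩ := exists_finset_floor hgR k
  have := natEntropy_le P ((measurable_floor_dyadic k).comp hf)
    ((measurable_floor_dyadic k).comp hg) A B hA hB (2 * K + 2) (fun b => by
      refine ⟨Finset.Icc (⌊c * 2 ^ k⌋ - b - 1 - K) (⌊c * 2 ^ k⌋ - b + K), ?_, ?_⟩
      · rw [Int.card_Icc]; omega
      filter_upwards [h] with z hz hb
      simp only [Function.comp_apply] at hb ⊢
      have hp : (0 : ℝ) < 2 ^ k := by positivity
      rw [show |f z + g z - c| * 2 ^ k = |(f z + g z - c) * 2 ^ k| by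
        rw [abs_mul, abs_of_pos hp], abs_le] at hz
      rw [Int.floor_eq_iff] at hb
      have h1 := Int.floor_le (c * 2 ^ k)
      rw [Finset.mem_Icc]
      constructor
      · rw [Int.le_floor]
        push_cast
        linarith
      · have e : ⌊c * 2 ^ k⌋ - b + K = ⌊c * 2 ^ k - b + K⌋ := by
          rw [Int.floor_add_natCast, Int.floor_sub_intCast]
        rw [e]
        apply Int.floor_le_floor
        linarith)
  push_cast at this
  exact this

/-- The coarse label is a function of the fine one, and determines it up to `2 ^ (kf - kc)` choices;
so the conditional entropy, a difference of two entropies, lies in `[0, kf - kc]`. -/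
lemma condEntropyI_map_bounds {E : Type*} [MeasurableSpace E] (P : Measure E)
    [IsProbabilityMeasure P] {f : E → ℝ} (hf : Measurable f) {R : ℝ}
    (hfR : ∀ᵐ z ∂P, |f z| ≤ R) {kc kf : ℕ} (hk : kc ≤ kf) :
    condEntropyI kf kc (Measure.map f P) =
        (natEntropy P (fun z => ⌊f z * 2 ^ kf⌋) - natEntropy P (fun z => ⌊f z * 2 ^ kc⌋)) /
          Real.log 2 ∧
      0 ≤ condEntropyI kf kc (Measure.map f P) ∧
      condEntropyI kf kc (Measure.map f P) ≤ (kf - kc : ℕ) := by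
  obtain ⟨A, hA⟩ := exists_finset_floor hfR kf
  obtain ⟨B, hB⟩ := exists_finset_floor hfR kc
  have hl : 0 < Real.log 2 := Real.log_pos one_lt_two
  have hmf : Measurable fun z => ⌊f z * 2 ^ kf⌋ := (measurable_floor_dyadic kf).comp hf
  have hmc : Measurable fun z => ⌊f z * 2 ^ kc⌋ := (measurable_floor_dyadic kc).comp hf
  have : IsProbabilityMeasure (Measure.map f P) :=
    Measure.isProbabilityMeasure_map hf.aemeasurable
  have e : condEntropyI kf kc (Measure.map f P) =
        (natEntropy P (fun z => ⌊f z * 2 ^ kf⌋) - natEntropy P (fun z => ⌊f z * 2 ^ kc⌋)) /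
          Real.log 2 := by
    rw [condEntropyI_eq hk _ A, entropyI_eq P hf, entropyI_eq P hf, sub_div]
    rw [ae_map_iff hf.aemeasurable]
    · exact hA
    · exact measurable_floor_dyadic kf A.measurableSet
  refine ⟨e, ?_, ?_⟩
  · rw [e]
    refine div_nonneg (sub_nonneg.2 ?_) hl.le
    have := natEntropy_le P hmc hmf B A hB hA 1 (fun b =>
      ⟨{b / (2 ^ (kf - kc) : ℕ)}, by simp, Filter.Eventually.of_forall fun z hz => by
        rw [Finset.mem_singleton, floor_coarse hk, hz]⟩)
    simpa using this
  · rw [e, div_le_iff₀ hl, sub_le_iff_le_add', ← Real.log_pow]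
    have := natEntropy_le P hmf hmc A B hA hB (2 ^ (kf - kc)) (fun b =>
      ⟨Finset.Ico (b * (2 ^ (kf - kc) : ℕ)) (b * (2 ^ (kf - kc) : ℕ) + (2 ^ (kf - kc) : ℕ)),
        by simp, Filter.Eventually.of_forall fun z hz => by
        rw [floor_coarse hk, Int.ediv_eq_iff_of_pos (by positivity)] at hz
        rw [Finset.mem_Ico]
        constructor <;> linarith [hz.1, hz.2]⟩)
    simpa using this

/-! ### Linearization of the distance on a cube -/

/-- The distance to `0` agrees with its linearization at `a` up to a quadratic error. -/
lemma abs_norm_sub_inner_le {E : Type*} [NormedAddCommGroup E] [InnerProductSpace ℝ E]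
    (a w : E) (ha : a ≠ 0) :
    |‖w‖ - ⟪‖a‖⁻¹ • a, w⟫| ≤ ‖a - w‖ ^ 2 / (2 * ‖a‖) := by
  have ha' : 0 < ‖a‖ := norm_pos_iff.2 ha
  have h1 := real_inner_le_norm a w
  have h2 := norm_sub_sq_real a w
  have e : ‖w‖ - ⟪‖a‖⁻¹ • a, w⟫ = (2 * (‖a‖ * ‖w‖ - ⟪a, w⟫)) / (2 * ‖a‖) := by
    rw [real_inner_smul_left]
    field_simp
  rw [e, abs_of_nonneg (div_nonneg (by linarith) (by linarith))]
  gcongr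
  nlinarith [sq_nonneg (‖a‖ - ‖w‖)]

lemma norm_sub_sq_le_of_mem_eCube {d k : ℕ} {n : Fin d → ℤ} {x z : EuclideanSpace ℝ (Fin d)}
    (hx : x ∈ eCube d k n) (hz : z ∈ eCube d k n) : ‖x - z‖ ^ 2 * 4 ^ k ≤ d := by
  rw [EuclideanSpace.norm_sq_eq, Finset.sum_mul]
  refine (Finset.sum_le_sum (g := fun _ => (1 : ℝ)) fun i _ => ?_).trans_eq (by simp)
  have h := (Int.abs_sub_lt_one_of_floor_eq_floor ((hx i).trans (hz i).symm)).le
  have e : ‖(x - z) i‖ ^ 2 * 4 ^ k = |x i * 2 ^ k - z i * 2 ^ k| ^ 2 := by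
    rw [← sub_mul, sq_abs, mul_pow, ← pow_mul, mul_comm k 2, pow_mul, Real.norm_eq_abs, sq_abs]
    norm_num
  rw [e]
  exact pow_le_one₀ (abs_nonneg _) h

lemma measurableSet_eCube (d k : ℕ) (n : Fin d → ℤ) : MeasurableSet (eCube d k n) := by
  have : eCube d k n = ⋂ i, {x | ⌊x i * 2 ^ k⌋ = n i} := by
    ext x; simp [eCube]
  rw [this]
  refine MeasurableSet.iInter fun i => ?_
  have hm : Measurable fun x : EuclideanSpace ℝ (Fin d) => x i :=
    (EuclideanSpace.proj (𝕜 := ℝ) i).continuous.measurable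
  exact ((measurable_floor_dyadic k).comp hm) (measurableSet_singleton (n i))

lemma msupport_eq_support {E : Type*} [MeasurableSpace E] [PseudoMetricSpace E]
    (μ : Measure E) : msupport μ = μ.support := by
  ext x
  rw [Metric.nhds_basis_ball.mem_measureSupport]
  rfl

/-! ### Comparison of the two conditional entropies -/

/-- linearization lemma. Let `μ` be a Borel probability measure on
`[0,1)^d` and `y ∉ supp μ`. If `m_j ≤ m_{j+1}` with `m_{j+1} − m_j ≤ m_j + 1`, then for
every `Q ∈ D_{m_j}` of positive measure and every `x_Q ∈ Q`,
`|H(Δ_y(μ_Q), D_{m_{j+1}}|D_{m_j}) − H(Π_{θ(y,x_Q)}(μ_Q), D_{m_{j+1}}|D_{m_j})| ≤ C`,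
where `C > 0` depends only on `dist(y, supp μ)`. -/
theorem statement7 (d : ℕ) (hd : 1 ≤ d) :
    ∃ C : ℝ → ℝ, (∀ r : ℝ, 0 < r → 0 < C r) ∧
      ∀ μ : Measure (EuclideanSpace ℝ (Fin d)), IsProbabilityMeasure μ →
        μ (eUnitCube d)ᶜ = 0 →
        ∀ y : EuclideanSpace ℝ (Fin d), y ∉ msupport μ →
          ∀ mj mj1 : ℕ, mj ≤ mj1 → mj1 - mj ≤ mj + 1 →
            ∀ n : Fin d → ℤ, 0 < μ (eCube d mj n) →
              ∀ xQ ∈ eCube d mj n,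
                |condEntropyI mj1 mj
                    (Measure.map (fun z => dist z y)
                      ((μ (eCube d mj n))⁻¹ • μ.restrict (eCube d mj n))) -
                  condEntropyI mj1 mj
                    (Measure.map (fun z => ⟪dirTheta y xQ, z⟫)
                      ((μ (eCube d mj n))⁻¹ • μ.restrict (eCube d mj n)))| ≤
                C (Metric.infDist y (msupport μ)) := by
  classical
  set K : ℝ → ℕ := fun r => ⌈2 * d / r⌉₊ with hK
  have hl : 0 < Real.log 2 := Real.log_pos one_lt_two
  have hlogK : ∀ r, 0 ≤ Real.log (2 * K r + 2) := fun r =>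
    Real.log_nonneg (by linarith [(K r).cast_nonneg (α := ℝ)])
  refine ⟨fun r => 4 * d / r ^ 2 + 1 + 2 * Real.log (2 * K r + 2) / Real.log 2, ?_, ?_⟩
  · intro r hr
    have := hlogK r
    positivity
  intro μ hμ _ y hy mj mj1 hmj hmj1 n hQ x hx
  rw [msupport_eq_support] at hy ⊢
  set r := Metric.infDist y μ.support with hr_def
  set Q := eCube d mj n with hQ_def
  obtain ⟨s, hsQ, hs⟩ := Measure.nonempty_inter_support_of_pos hQ
  have hr : 0 < r :=
    (Measure.isClosed_support.notMem_iff_infDist_pos ⟨s, hs⟩).1 hy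
  have hrs : r ≤ dist y s := Metric.infDist_le_dist_of_mem hs
  set P := (μ Q)⁻¹ • μ.restrict Q with hP
  have hPp : IsProbabilityMeasure P := ⟨by
    rw [hP, Measure.smul_apply, Measure.restrict_apply_univ, smul_eq_mul]
    exact ENNReal.inv_mul_cancel hQ.ne' (measure_ne_top _ _)⟩
  have hPQ : ∀ᵐ z ∂P, z ∈ Q :=
    Measure.ae_smul_measure (ae_restrict_mem (measurableSet_eCube d mj n)) _
  set θ := dirTheta y x with hθ
  have hf : Measurable fun z : EuclideanSpace ℝ (Fin d) => dist z y :=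
    (continuous_id.dist continuous_const).measurable
  have hg : Measurable fun z : EuclideanSpace ℝ (Fin d) => ⟪θ, z⟫ :=
    (continuous_const.inner continuous_id).measurable
  have hdiam : ∀ z ∈ Q, ‖x - z‖ ^ 2 * 4 ^ mj ≤ d := fun z hz =>
    norm_sub_sq_le_of_mem_eCube hx hz
  have hz_norm : ∀ z ∈ Q, ‖z‖ ≤ ‖x‖ + d + 1 := by
    intro z hz
    have h1 : ‖x - z‖ ^ 2 ≤ d :=
      (le_mul_of_one_le_right (sq_nonneg _) (one_le_pow₀ (by norm_num))).trans (hdiam z hz)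
    have h2 : ‖z‖ ≤ ‖x‖ + ‖x - z‖ := by
      simpa using norm_sub_le x (x - z)
    nlinarith [sq_nonneg (‖x - z‖ - 1)]
  set R := (1 + ‖θ‖) * (‖x‖ + d + 1) + ‖y‖ with hR
  have hfR : ∀ᵐ z ∂P, |dist z y| ≤ R := by
    filter_upwards [hPQ] with z hz
    rw [abs_of_nonneg dist_nonneg, dist_eq_norm]
    have := norm_sub_le z y
    have := hz_norm z hz
    have : 0 ≤ ‖θ‖ * (‖x‖ + d + 1) := by positivity
    linarith
  have hgR : ∀ᵐ z ∂P, |⟪θ, z⟫| ≤ R := by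
    filter_upwards [hPQ] with z hz
    have h1 := abs_real_inner_le_norm θ z
    have h2 := mul_le_mul_of_nonneg_left (hz_norm z hz) (norm_nonneg θ)
    have h3 : 0 ≤ ‖x‖ + d + 1 := by positivity
    linarith [norm_nonneg y]
  obtain ⟨ef, f0, f1⟩ := condEntropyI_map_bounds P hf hfR hmj
  obtain ⟨eg, g0, g1⟩ := condEntropyI_map_bounds P hg hgR hmj
  -- the cube is either large compared with `r`, so that `mj` is bounded, or small
  rcases lt_or_ge (r ^ 2 / 4 * 4 ^ mj) (d : ℝ) with hbig | hsmall
  · have h1 : (mj : ℝ) ≤ 4 * d / r ^ 2 := by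
      have h4 : (mj : ℝ) ≤ 4 ^ mj := by
        exact_mod_cast (Nat.lt_pow_self (by norm_num)).le
      rw [le_div_iff₀ (by positivity)]
      nlinarith [sq_nonneg r]
    have h2 : ((mj1 - mj : ℕ) : ℝ) ≤ mj + 1 := by exact_mod_cast hmj1
    have h3 : 0 ≤ 2 * Real.log (2 * K r + 2) / Real.log 2 := by
      have := hlogK r
      positivity
    rw [abs_le]
    constructor <;> linarith
  · have hsmall' : ∀ z ∈ Q, ‖x - z‖ ≤ r / 2 := by
      intro z hz
      have h1 := (hdiam z hz).trans hsmall
      have h2 := le_of_mul_le_mul_right h1 (by positivity)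
      exact (abs_le_of_sq_le_sq' (by linarith) (by positivity)).2
    have hyx : r / 2 ≤ ‖y - x‖ := by
      have h1 := hsmall' s hsQ
      rw [dist_eq_norm] at hrs
      have h2 : ‖y - s‖ ≤ ‖y - x‖ + ‖x - s‖ := norm_sub_le_norm_sub_add_norm_sub _ _ _
      linarith
    have hyx0 : y - x ≠ 0 := norm_pos_iff.1 (by linarith)
    have hlin : ∀ z ∈ Q, |dist z y + ⟪θ, z⟫ - ⟪θ, y⟫| * 2 ^ mj1 ≤ K r := by
      intro z hz
      have h1 := abs_norm_sub_inner_le (y - x) (y - z) hyx0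
      rw [sub_sub_sub_cancel_left, norm_sub_rev z x] at h1
      have e : dist z y + ⟪θ, z⟫ - ⟪θ, y⟫ = ‖y - z‖ - ⟪‖y - x‖⁻¹ • (y - x), y - z⟫ := by
        rw [dist_comm, dist_eq_norm, hθ, dirTheta, inner_sub_right]
        ring
      rw [e]
      -- the only use of `mj1 - mj ≤ mj + 1`: the quadratic error is of the size of a fine interval
      have h2 : (2 : ℝ) ^ mj1 ≤ 2 * 4 ^ mj := by
        calc (2 : ℝ) ^ mj1 ≤ 2 ^ (2 * mj + 1) := pow_le_pow_right₀ (by norm_num) (by omega)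
          _ = 2 * 4 ^ mj := by rw [pow_succ, pow_mul]; norm_num; ring
      calc _ ≤ ‖x - z‖ ^ 2 / (2 * ‖y - x‖) * (2 * 4 ^ mj) := by gcongr
        _ ≤ ‖x - z‖ ^ 2 / (2 * (r / 2)) * (2 * 4 ^ mj) := by gcongr
        _ = 2 * (‖x - z‖ ^ 2 * 4 ^ mj) / r := by field_simp
        _ ≤ 2 * d / r := by gcongr; exact hdiam z hz
        _ ≤ K r := Nat.le_ceil _
    have hfg : ∀ k ≤ mj1, ∀ᵐ z ∂P, |dist z y + ⟪θ, z⟫ - ⟪θ, y⟫| * 2 ^ k ≤ K r := by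
      intro k hk
      filter_upwards [hPQ] with z hz
      refine le_trans ?_ (hlin z hz)
      gcongr
      norm_num
    have hgf : ∀ k ≤ mj1, ∀ᵐ z ∂P, |⟪θ, z⟫ + dist z y - ⟪θ, y⟫| * 2 ^ k ≤ K r := by
      intro k hk
      filter_upwards [hfg k hk] with z hz
      rwa [add_comm ⟪θ, z⟫]
    have a1 := natEntropy_floor_le P hf hg hfR hgR mj1 (K r) _ (hfg mj1 le_rfl)
    have a2 := natEntropy_floor_le P hg hf hgR hfR mj1 (K r) _ (hgf mj1 le_rfl)
    have a3 := natEntropy_floor_le P hf hg hfR hgR mj (K r) _ (hfg mj hmj)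
    have a4 := natEntropy_floor_le P hg hf hgR hfR mj (K r) _ (hgf mj hmj)
    have h0 : 0 ≤ 4 * d / r ^ 2 + 1 := by positivity
    refine le_trans ?_ (le_add_of_nonneg_left h0)
    rw [ef, eg, ← sub_div, abs_div, abs_of_pos hl]
    gcongr
    rw [abs_le]
    constructor <;> linarith
end
end
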